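/- arXiv:1601.05496 — 2 statements merged into one kernel-verified Lean document; each statement's English description precedes it below -/
import Mathlib

section
/- Let 0 < q < 1, 0 < 2α < n, and let σ be a radially symmetric nonnegative locally finite Borel measure on ℝⁿ. Suppose u is a radial nonnegative function, not identically zero or infinity, satisfying u ≥ I_{2α}(u^q dσ) and the dual bound (∫_{B(0,R)} |y|^{-(n-2α)q} dσ(y))^{1/(1-q)} ≤ C ∫_{B(0,R)} u^q dσ for all R > 0. Then for every x ≠ 0, u(x) ≥ c |x|^{-(n-2α)} (∫_{|y|<|x|} dσ(y)/|y|^{(n-2α)q})^{1/(1-q)}; in particular if u is finite somewhere then ∫_{|y|<1} dσ(y)/|y|^{(n-2α)q} < ∞ and ∫_{|y|≥1} dσ(y)/|y|^{n-2α} < ∞. -/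
open MeasureTheory Metric Set

/-- The Riesz potential `I_{2α}μ(x) = ∫_0^∞ μ(B(x,r))/r^{n-2α} dr/r`. -/
noncomputable def riesz2 {n : ℕ} (α : ℝ)
    (μ : Measure (EuclideanSpace ℝ (Fin n)))
    (x : EuclideanSpace ℝ (Fin n)) : ENNReal :=
  ∫⁻ r in Ioi (0:ℝ),
    μ (ball x r) / ENNReal.ofReal (r ^ ((n : ℝ) - 2 * α)) / ENNReal.ofReal r

/-!
Write `d = n - 2α` and `dν = u^q dσ`. Balls about `x` of radius `r > 2 max(|x|, |y|)` contain `y`,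
so Tonelli's theorem gives `P(|x|) ≤ K I_d ν(x) ≤ K u(x)` with `P(R) = ∫ max(R, |y|)^{-d} dν(y)`
and `K = d 2^d`. Since `ν(B(0,R)) ≤ R^d P(R)`, the dual bound yields the lower estimate for `u`, and
finiteness of `u` at one point bounds `∫_{|y|<1} |y|^{-dq} dσ`.

For the exterior integral let `m` be the image under `|·|` of `|y|^{-d} dν(y)` on `|y| ≥ 1`. It is
finite and `m([r, ∞)) ≤ P(r)`, hence `m{P ≤ t} ≤ t`, and the layer cake formula gives
`∫ P^{-q} dm < ∞` because `q < 1`. As `P ≤ K u`, this integral is at least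
`K^{-q} ∫_{|y|≥1} |y|^{-d} dσ`.
-/

section Measure

lemma lintegral_setLIntegral_Ioi {X : Type*} [MeasurableSpace X] (μ : Measure X) [SFinite μ]
    {α : Type*} [LinearOrder α] [TopologicalSpace α] [OrderClosedTopology α]
    [SecondCountableTopology α] [MeasurableSpace α] [OpensMeasurableSpace α] (ρ : Measure α)
    [SFinite ρ] {f : X → α} (hf : Measurable f) {k : α → ENNReal} (hk : Measurable k) :
    ∫⁻ y, ∫⁻ r in Ioi (f y), k r ∂ρ ∂μ = ∫⁻ r, k r * μ {y | f y < r} ∂ρ := by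
  have hset : MeasurableSet {p : X × α | f p.1 < p.2} :=
    measurableSet_lt (hf.comp measurable_fst) measurable_snd
  calc ∫⁻ y, ∫⁻ r in Ioi (f y), k r ∂ρ ∂μ
      = ∫⁻ y, ∫⁻ r, {p : X × α | f p.1 < p.2}.indicator (fun p => k p.2) (y, r) ∂ρ ∂μ := by
        simp_rw [← lintegral_indicator measurableSet_Ioi]; rfl
    _ = ∫⁻ r, ∫⁻ y, {p : X × α | f p.1 < p.2}.indicator (fun p => k p.2) (y, r) ∂μ ∂ρ :=
        lintegral_lintegral_swap ((hk.comp measurable_snd).indicator hset).aemeasurable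
    _ = ∫⁻ r, k r * μ {y | f y < r} ∂ρ := by
        refine lintegral_congr fun r => ?_
        exact lintegral_indicator_const (measurableSet_lt hf measurable_const) (k r)

lemma measure_setOf_le_le_of_measure_Ici_le {α : Type*} [LinearOrder α] [TopologicalSpace α]
    [OrderTopology α] [SecondCountableTopology α] [MeasurableSpace α] [BorelSpace α]
    (μ : Measure α) [μ.InnerRegular] {G : α → ENNReal} (hG : Antitone G)
    (hμ : ∀ r, μ (Ici r) ≤ G r) (t : ENNReal) : μ {r | G r ≤ t} ≤ t := by
  rw [(measurableSet_le hG.measurable measurable_const).measure_eq_iSup_isCompact]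
  refine iSup₂_le fun K hK => iSup_le fun hKc => ?_
  rcases K.eq_empty_or_nonempty with rfl | hKne
  · simp
  obtain ⟨a, haK, ha⟩ := hKc.exists_isLeast hKne
  calc μ K ≤ μ (Ici a) := measure_mono ha
    _ ≤ G a := hμ a
    _ ≤ t := hK haK

lemma lintegral_rpow_neg_lt_top_of_measure_setOf_le_le {X : Type*} [MeasurableSpace X]
    (μ : Measure X) [IsFiniteMeasure μ] {g : X → ENNReal} (hg : Measurable g)
    (hμ : ∀ t, μ {y | g y ≤ t} ≤ t) {q : ℝ} (hq : 0 < q) (hq1 : q < 1) :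
    ∫⁻ y, g y ^ (-q) ∂μ < ⊤ := by
  have hg0 : ∀ᵐ y ∂μ, g y ≠ 0 := by
    rw [ae_iff]
    simpa using hμ 0
  have hofReal : ∀ᵐ y ∂μ, g y ^ (-q) = ENNReal.ofReal (g y ^ (-q)).toReal := by
    filter_upwards [hg0] with y hy
    rw [ENNReal.ofReal_toReal]
    simp [ENNReal.rpow_eq_top_iff, hy, hq.le]
  have htail : ∀ t ∈ Ioi (1 : ℝ),
      μ {y | t < (g y ^ (-q)).toReal} ≤ ENNReal.ofReal (t ^ (-(1 / q))) := by
    intro t ht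
    have ht0 : 0 < t := zero_lt_one.trans ht
    refine (measure_mono fun y hy => ?_).trans (hμ _)
    have hlt : ENNReal.ofReal t < g y ^ (-q) :=
      lt_of_not_ge fun h => hy.not_ge (ENNReal.toReal_le_of_le_ofReal ht0.le h)
    rw [ENNReal.rpow_neg, ENNReal.lt_inv_iff_lt_inv, ← ENNReal.lt_rpow_inv_iff hq,
      ENNReal.inv_rpow, ENNReal.ofReal_rpow_of_pos ht0,
      ← ENNReal.ofReal_inv_of_pos (by positivity), ← Real.rpow_neg ht0.le, ← one_div] at hlt
    exact hlt.le
  have hint : ∫⁻ t in Ioi (1 : ℝ), ENNReal.ofReal (t ^ (-(1 / q))) < ⊤ :=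
    (integrableOn_Ioi_rpow_of_lt (neg_lt_neg ((one_lt_div hq).2 hq1)) one_pos).lintegral_lt_top
  rw [lintegral_congr_ae hofReal, lintegral_eq_lintegral_meas_lt μ
    (.of_forall fun _ => ENNReal.toReal_nonneg) (hg.pow_const _).ennreal_toReal.aemeasurable,
    ← Ioc_union_Ioi_eq_Ioi zero_le_one, lintegral_union measurableSet_Ioi (Ioc_disjoint_Ioi le_rfl)]
  refine ENNReal.add_lt_top.2 ⟨?_, (setLIntegral_mono' measurableSet_Ioi htail).trans_lt hint⟩
  calc ∫⁻ t in Ioc (0 : ℝ) 1, μ {y | t < (g y ^ (-q)).toReal}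
      ≤ ∫⁻ _ in Ioc (0 : ℝ) 1, μ univ := lintegral_mono fun _ => measure_mono (subset_univ _)
    _ < ⊤ := by simp

lemma lintegral_rpow_neg_lt_top_of_measure_Ici_le {α : Type*} [LinearOrder α] [TopologicalSpace α]
    [OrderTopology α] [SecondCountableTopology α] [MeasurableSpace α] [BorelSpace α]
    (μ : Measure α) [μ.InnerRegular] [IsFiniteMeasure μ] {G : α → ENNReal} (hG : Antitone G)
    (hμ : ∀ r, μ (Ici r) ≤ G r) {q : ℝ} (hq : 0 < q) (hq1 : q < 1) :
    ∫⁻ r, G r ^ (-q) ∂μ < ⊤ :=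
  lintegral_rpow_neg_lt_top_of_measure_setOf_le_le μ hG.measurable
    (measure_setOf_le_le_of_measure_Ici_le μ hG hμ) hq hq1

lemma lintegral_le_mul_lintegral_withDensity_rpow {X : Type*} [MeasurableSpace X] {σ : Measure X}
    {f g u : X → ENNReal} (hf : Measurable f) (hg : Measurable g) (hg0 : ∀ᵐ y ∂σ, g y ≠ 0)
    (hgt : ∀ᵐ y ∂σ, g y ≠ ⊤) {K : ENNReal} (hK : K ≠ ⊤) (hgu : ∀ᵐ y ∂σ, g y ≤ K * u y)
    {q : ℝ} (hq : 0 ≤ q) :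
    ∫⁻ y, f y ∂σ ≤ K ^ q * ∫⁻ y, f y * g y ^ (-q) ∂σ.withDensity fun y => u y ^ q := by
  have hle : σ.withDensity (fun y => g y ^ q) ≤ K ^ q • σ.withDensity fun y => u y ^ q := by
    rw [← withDensity_smul' _ _ (ENNReal.rpow_ne_top_of_nonneg hq hK)]
    refine withDensity_mono (hgu.mono fun y hy => ?_)
    simpa only [Pi.smul_apply, smul_eq_mul, ENNReal.mul_rpow_of_nonneg _ _ hq]
      using ENNReal.rpow_le_rpow hy hq
  calc ∫⁻ y, f y ∂σ = ∫⁻ y, g y ^ q * (f y * g y ^ (-q)) ∂σ := by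
        refine lintegral_congr_ae ?_
        filter_upwards [hg0, hgt] with y hy0 hyt
        rw [mul_left_comm, ← ENNReal.rpow_add _ _ hy0 hyt, add_neg_cancel, ENNReal.rpow_zero,
          mul_one]
    _ = ∫⁻ y, f y * g y ^ (-q) ∂σ.withDensity fun y => g y ^ q :=
        (lintegral_withDensity_eq_lintegral_mul σ (hg.pow_const q)
          (hf.mul (hg.pow_const (-q)))).symm
    _ ≤ ∫⁻ y, f y * g y ^ (-q) ∂(K ^ q • σ.withDensity fun y => u y ^ q) :=
        lintegral_mono' hle le_rfl
    _ = K ^ q * ∫⁻ y, f y * g y ^ (-q) ∂σ.withDensity fun y => u y ^ q :=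
        lintegral_smul_measure _ _

lemma eq_zero_of_setLIntegral_ball_eq_zero {X : Type*} [PseudoMetricSpace X]
    [MeasurableSpace X] [OpensMeasurableSpace X] {σ : Measure X} {o : X} {f : X → ENNReal}
    (hf : Measurable f) (hf0 : ∀ y, f y ≠ 0)
    (hball : ∀ R : ℝ, 0 < R → ∫⁻ y in ball o R, f y ∂σ = 0) : σ = 0 := by
  have hσ : ∀ k : ℕ, σ (ball o (k + 1)) = 0 := fun k => by
    have h := (setLIntegral_eq_zero_iff measurableSet_ball hf).1 (hball (k + 1) (by positivity))
    exact measure_eq_zero_iff_ae_notMem.2 (h.mono fun y hy hyb => hf0 y (hy hyb))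
  rw [← Measure.measure_univ_eq_zero, ← iUnion_ball_nat_succ o]
  exact measure_iUnion_null hσ

end Measure

section Kernel

variable {d : ℝ}

lemma lintegral_Ioi_inv_rpow_mul_inv (hd : 0 < d) {s : ℝ} (hs : 0 < s) :
    ∫⁻ r in Ioi s, (ENNReal.ofReal (r ^ d))⁻¹ * (ENNReal.ofReal r)⁻¹ =
      (ENNReal.ofReal (d * s ^ d))⁻¹ := by
  have hexp : -d - 1 < -1 := by linarith
  calc ∫⁻ r in Ioi s, (ENNReal.ofReal (r ^ d))⁻¹ * (ENNReal.ofReal r)⁻¹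
      = ∫⁻ r in Ioi s, ENNReal.ofReal (r ^ (-d - 1)) := by
        refine setLIntegral_congr_fun measurableSet_Ioi fun r hr => ?_
        have hr0 : 0 < r := hs.trans hr
        rw [← ENNReal.ofReal_inv_of_pos (by positivity), ← ENNReal.ofReal_inv_of_pos hr0,
          ← ENNReal.ofReal_mul (by positivity), Real.rpow_sub_one hr0.ne', Real.rpow_neg hr0.le,
          div_eq_mul_inv]
    _ = ENNReal.ofReal (∫ r in Ioi s, r ^ (-d - 1)) := by
        refine (ofReal_integral_eq_lintegral_ofReal (integrableOn_Ioi_rpow_of_lt hexp hs) ?_).symm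
        filter_upwards [ae_restrict_mem measurableSet_Ioi] with r hr
        exact Real.rpow_nonneg (hs.trans hr).le _
    _ = (ENNReal.ofReal (d * s ^ d))⁻¹ := by
        rw [integral_Ioi_rpow_of_lt hexp hs, ← ENNReal.ofReal_inv_of_pos (by positivity),
          sub_add_cancel, Real.rpow_neg hs.le, neg_div_neg_eq, mul_inv_rev, div_eq_mul_inv]

lemma inv_ofReal_rpow_eq_mul_lintegral_Ioi (hd : 0 < d) {s : ℝ} (hs : 0 < s) :
    (ENNReal.ofReal (s ^ d))⁻¹ = ENNReal.ofReal (d * 2 ^ d) *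
      ∫⁻ r in Ioi (2 * s), (ENNReal.ofReal (r ^ d))⁻¹ * (ENNReal.ofReal r)⁻¹ := by
  rw [lintegral_Ioi_inv_rpow_mul_inv hd (by positivity), Real.mul_rpow zero_le_two hs.le,
    ← mul_assoc, ENNReal.ofReal_mul (p := d * 2 ^ d) (by positivity),
    ENNReal.mul_inv (by simp) (by simp), ← mul_assoc, ENNReal.mul_inv_cancel _ (by simp), one_mul]
  have : 0 < d * 2 ^ d := by positivity
  simpa using this

end Kernel

section Potential

variable {X : Type*} [PseudoMetricSpace X] [MeasurableSpace X]

/-- The Riesz potential `∫_0^∞ μ(B(x,r)) / r^d dr/r` of a measure on a pseudometric space. The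
exponent `d` stands for `n - 2α`, so that `riesz2 α` is the Euclidean case. -/
noncomputable def rieszPotential (d : ℝ) (μ : Measure X) (x : X) : ENNReal :=
  ∫⁻ r in Ioi (0 : ℝ), μ (ball x r) / ENNReal.ofReal (r ^ d) / ENNReal.ofReal r

lemma riesz2_eq_rieszPotential {n : ℕ} (α : ℝ) :
    riesz2 (n := n) α = rieszPotential ((n : ℝ) - 2 * α) := rfl

/-- The potential `∫ max(R, |y|)^{-d} dμ(y)`, with `|y|` the distance to the base point `o`. For
`R = |x|` it is `μ(B(o,R)) / R^d + ∫_{|y| ≥ R} |y|^{-d} dμ(y)`, the size of the Riesz potential at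
`x` of a measure `μ` that is radial about `o`. -/
noncomputable def radialPotential (d : ℝ) (μ : Measure X) (o : X) (R : ℝ) : ENNReal :=
  ∫⁻ y, (ENNReal.ofReal (max R (dist y o) ^ d))⁻¹ ∂μ

variable {o : X} {d R : ℝ} {μ : Measure X}

lemma radialPotential_antitone (hd : 0 ≤ d) : Antitone (radialPotential d μ o) := fun _ _ hrs =>
  lintegral_mono fun _ => ENNReal.inv_le_inv.2 <| ENNReal.ofReal_le_ofReal <|
    Real.rpow_le_rpow (le_max_of_le_right dist_nonneg) (max_le_max hrs le_rfl) hd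

lemma radialPotential_le_mul (hd : 0 ≤ d) {r : ℝ} (hr : 0 < r) (hrR : r ≤ R) :
    radialPotential d μ o r ≤ ENNReal.ofReal ((R / r) ^ d) * radialPotential d μ o R := by
  have hR : 0 < R := hr.trans_le hrR
  rw [radialPotential, radialPotential, ← lintegral_const_mul' _ _ ENNReal.ofReal_ne_top]
  refine lintegral_mono fun y => ?_
  have hmax : max R (dist y o) ≤ R / r * max r (dist y o) := by
    rw [mul_max_of_nonneg _ _ (by positivity), div_mul_cancel₀ _ hr.ne']
    exact max_le_max le_rfl (le_mul_of_one_le_left dist_nonneg ((one_le_div hr).2 hrR))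
  have hr' : 0 < max r (dist y o) := lt_max_of_lt_left hr
  have hR' : 0 < max R (dist y o) := lt_max_of_lt_left hR
  rw [← ENNReal.ofReal_inv_of_pos (Real.rpow_pos_of_pos hr' d),
    ← ENNReal.ofReal_inv_of_pos (Real.rpow_pos_of_pos hR' d), ← ENNReal.ofReal_mul (by positivity)]
  refine ENNReal.ofReal_le_ofReal ?_
  rw [← div_eq_mul_inv, le_div_iff₀ (by positivity), inv_mul_le_iff₀ (by positivity), mul_comm,
    ← Real.mul_rpow (by positivity) (by positivity)]
  exact Real.rpow_le_rpow hR'.le hmax hd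

variable [OpensMeasurableSpace X]

lemma radialPotential_le_rieszPotential [SFinite μ] (hd : 0 < d) (hR : 0 < R) {x : X}
    (hx : dist x o ≤ R) :
    radialPotential d μ o R ≤ ENNReal.ofReal (d * 2 ^ d) * rieszPotential d μ x := by
  set k : ℝ → ENNReal := fun r => (ENNReal.ofReal (r ^ d))⁻¹ * (ENNReal.ofReal r)⁻¹
  have hball : ∀ r, {y | 2 * max R (dist y o) < r} ⊆ ball x r := by
    intro r y hy
    calc dist y x ≤ dist y o + dist x o := dist_triangle_right y x o
      _ ≤ 2 * max R (dist y o) := by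
        linarith [le_max_left R (dist y o), le_max_right R (dist y o)]
      _ < r := hy
  calc radialPotential d μ o R
      = ∫⁻ y, ENNReal.ofReal (d * 2 ^ d) * (∫⁻ r in Ioi (2 * max R (dist y o)), k r) ∂μ :=
        lintegral_congr fun y => inv_ofReal_rpow_eq_mul_lintegral_Ioi hd (lt_max_of_lt_left hR)
    _ = ENNReal.ofReal (d * 2 ^ d) * ∫⁻ r, k r * μ {y | 2 * max R (dist y o) < r} := by
        rw [lintegral_const_mul' _ _ ENNReal.ofReal_ne_top, lintegral_setLIntegral_Ioi]
        all_goals fun_prop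
    _ ≤ ENNReal.ofReal (d * 2 ^ d) * rieszPotential d μ x := by
        rw [rieszPotential, ← lintegral_indicator measurableSet_Ioi]
        gcongr with r
        rcases lt_or_ge 0 r with hr | hr
        · rw [indicator_of_mem (mem_Ioi.2 hr)]
          calc k r * μ {y | 2 * max R (dist y o) < r} ≤ k r * μ (ball x r) :=
                mul_le_mul_right (measure_mono (hball r)) _
            _ = μ (ball x r) / ENNReal.ofReal (r ^ d) / ENNReal.ofReal r := by
                rw [mul_comm, div_eq_mul_inv, div_eq_mul_inv, mul_assoc]
        · have : {y | 2 * max R (dist y o) < r} = ∅ :=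
            subset_empty_iff.1 ((hball r).trans (ball_eq_empty.2 hr).subset)
          simp [this]

lemma radialPotential_ne_zero (hμ : μ ≠ 0) (R : ℝ) : radialPotential d μ o R ≠ 0 := by
  have hmeas : Measurable fun y => (ENNReal.ofReal (max R (dist y o) ^ d))⁻¹ := by fun_prop
  rw [radialPotential, Ne, lintegral_eq_zero_iff hmeas]
  intro h
  have := ae_neBot.2 hμ
  obtain ⟨y, hy⟩ := h.exists
  exact ENNReal.inv_ne_zero.2 ENNReal.ofReal_ne_top hy

lemma measure_ball_div_le_radialPotential :
    μ (ball o R) / ENNReal.ofReal (R ^ d) ≤ radialPotential d μ o R := by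
  calc μ (ball o R) / ENNReal.ofReal (R ^ d)
      = ∫⁻ _ in ball o R, (ENNReal.ofReal (R ^ d))⁻¹ ∂μ := by
        rw [setLIntegral_const, mul_comm, div_eq_mul_inv]
    _ = ∫⁻ y in ball o R, (ENNReal.ofReal (max R (dist y o) ^ d))⁻¹ ∂μ :=
        setLIntegral_congr_fun measurableSet_ball fun y hy => by
          rw [max_eq_left (mem_ball.1 hy).le]
    _ ≤ radialPotential d μ o R := setLIntegral_le_lintegral _ _

lemma map_dist_withDensity_Ici_le_radialPotential (s : ℝ) :
    ((μ.withDensity fun y => (ENNReal.ofReal (dist y o ^ d))⁻¹).map fun y => dist y o) (Ici s) ≤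
      radialPotential d μ o s := by
  have hdist : Measurable fun y => dist y o := by fun_prop
  have hS : MeasurableSet ((fun y => dist y o) ⁻¹' Ici s) := hdist measurableSet_Ici
  rw [Measure.map_apply hdist measurableSet_Ici, withDensity_apply _ hS]
  calc ∫⁻ y in (fun y => dist y o) ⁻¹' Ici s, (ENNReal.ofReal (dist y o ^ d))⁻¹ ∂μ
      = ∫⁻ y in (fun y => dist y o) ⁻¹' Ici s, (ENNReal.ofReal (max s (dist y o) ^ d))⁻¹ ∂μ :=
        setLIntegral_congr_fun hS fun y hy => by rw [max_eq_right hy]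
    _ ≤ radialPotential d μ o s := setLIntegral_le_lintegral _ _

lemma setLIntegral_mul_radialPotential_rpow_neg_lt_top (hd : 0 ≤ d)
    (hfin : radialPotential d μ o R < ⊤) {q : ℝ} (hq : 0 < q) (hq1 : q < 1) :
    ∫⁻ y in {y | R ≤ dist y o},
      (ENNReal.ofReal (dist y o ^ d))⁻¹ * radialPotential d μ o (dist y o) ^ (-q) ∂μ < ⊤ := by
  have hdist : Measurable fun y => dist y o := by fun_prop
  have hP : Antitone (radialPotential d μ o) := radialPotential_antitone hd
  have hPq : Measurable fun s => radialPotential d μ o s ^ (-q) := hP.measurable.pow_const _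
  set τ : Measure ℝ :=
    (μ.withDensity fun y => (ENNReal.ofReal (dist y o ^ d))⁻¹).map fun y => dist y o
  have hτ : ∀ s, τ (Ici s) ≤ radialPotential d μ o s :=
    map_dist_withDensity_Ici_le_radialPotential
  have : IsFiniteMeasure (τ.restrict (Ici R)) := ⟨by simpa using (hτ R).trans_lt hfin⟩
  calc ∫⁻ y in {y | R ≤ dist y o},
        (ENNReal.ofReal (dist y o ^ d))⁻¹ * radialPotential d μ o (dist y o) ^ (-q) ∂μ
      = ∫⁻ y in {y | R ≤ dist y o}, radialPotential d μ o (dist y o) ^ (-q)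
          ∂μ.withDensity fun y => (ENNReal.ofReal (dist y o ^ d))⁻¹ :=
        (setLIntegral_withDensity_eq_setLIntegral_mul μ (by fun_prop) (hPq.comp hdist)
          (measurableSet_le measurable_const hdist)).symm
    _ = ∫⁻ s in Ici R, radialPotential d μ o s ^ (-q) ∂τ :=
        (setLIntegral_map measurableSet_Ici hPq hdist).symm
    _ < ⊤ := lintegral_rpow_neg_lt_top_of_measure_Ici_le _ hP
        (fun s => (Measure.restrict_le_self _).trans (hτ s)) hq hq1

lemma radialPotential_lt_top [SFinite μ] (hd : 0 < d) (hR : 0 < R) {x : X}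
    (hx : rieszPotential d μ x < ⊤) : radialPotential d μ o R < ⊤ := by
  have hmax : radialPotential d μ o (max R (dist x o)) < ⊤ :=
    (radialPotential_le_rieszPotential hd (lt_max_of_lt_left hR) (le_max_right _ _)).trans_lt
      (ENNReal.mul_lt_top ENNReal.ofReal_lt_top hx)
  exact (radialPotential_le_mul hd.le hR (le_max_left _ _)).trans_lt
    (ENNReal.mul_lt_top ENNReal.ofReal_lt_top hmax)

lemma measure_ball_div_le_rieszPotential [SFinite μ] (hd : 0 < d) (hR : 0 < R) {x : X}
    (hx : dist x o ≤ R) :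
    μ (ball o R) / ENNReal.ofReal (R ^ d) ≤ ENNReal.ofReal (d * 2 ^ d) * rieszPotential d μ x :=
  measure_ball_div_le_radialPotential.trans (radialPotential_le_rieszPotential hd hR hx)

lemma inv_mul_div_le_rieszPotential_of_le_measure_ball [SFinite μ] (hd : 0 < d) (hR : 0 < R)
    {x : X} (hx : dist x o ≤ R) {a C : ENNReal} (ha : a ≤ C * μ (ball o R)) :
    (C * ENNReal.ofReal (d * 2 ^ d))⁻¹ * (a / ENNReal.ofReal (R ^ d)) ≤ rieszPotential d μ x := by
  rw [mul_comm, ← div_eq_mul_inv]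
  refine ENNReal.div_le_of_le_mul' ?_
  calc a / ENNReal.ofReal (R ^ d) ≤ C * μ (ball o R) / ENNReal.ofReal (R ^ d) :=
        ENNReal.div_le_div_right ha _
    _ = C * (μ (ball o R) / ENNReal.ofReal (R ^ d)) := mul_div_assoc _ _ _
    _ ≤ C * (ENNReal.ofReal (d * 2 ^ d) * rieszPotential d μ x) :=
        mul_le_mul_right (measure_ball_div_le_rieszPotential hd hR hx) C
    _ = C * ENNReal.ofReal (d * 2 ^ d) * rieszPotential d μ x := (mul_assoc _ _ _).symm

lemma measure_ball_lt_top_of_rieszPotential_lt_top [SFinite μ] (hd : 0 < d) (hR : 0 < R) {x : X}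
    (hx : rieszPotential d μ x < ⊤) : μ (ball o R) < ⊤ := by
  by_contra! htop
  have hdiv : μ (ball o R) / ENNReal.ofReal (R ^ d) < ⊤ :=
    measure_ball_div_le_radialPotential.trans_lt (radialPotential_lt_top hd hR hx)
  simp [top_le_iff.1 htop, ENNReal.top_div] at hdiv

end Potential

section Supersolution

variable {X : Type*} [PseudoMetricSpace X] [MeasurableSpace X] [OpensMeasurableSpace X]
  {o : X} {d q R : ℝ} {σ : Measure X} {u : X → ENNReal}

lemma setLIntegral_inv_dist_rpow_lt_top [SFinite σ] (hd : 0 < d) (hq : 0 < q) (hq1 : q < 1)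
    (hsuper : ∀ x, rieszPotential d (σ.withDensity fun y => u y ^ q) x ≤ u x)
    (hne : (σ.withDensity fun y => u y ^ q) ≠ 0) (hfin : ∃ x, u x < ⊤) (hR : 0 < R) :
    ∫⁻ y in {y | R ≤ dist y o}, (ENNReal.ofReal (dist y o ^ d))⁻¹ ∂σ < ⊤ := by
  obtain ⟨x, hx⟩ := hfin
  have hdist : Measurable fun y => dist y o := by fun_prop
  have hS : MeasurableSet {y | R ≤ dist y o} := measurableSet_le measurable_const hdist
  set ν := σ.withDensity fun y => u y ^ q
  have hP : Antitone (radialPotential d ν o) := radialPotential_antitone hd.le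
  have hPR : radialPotential d ν o R < ⊤ := radialPotential_lt_top hd hR ((hsuper x).trans_lt hx)
  have hPu : ∀ y ∈ {y | R ≤ dist y o}, radialPotential d ν o (dist y o) ≤
      ENNReal.ofReal (d * 2 ^ d) * u y := fun y hy =>
    (radialPotential_le_rieszPotential hd (hR.trans_le hy) le_rfl).trans
      (mul_le_mul_right (hsuper y) _)
  refine (lintegral_le_mul_lintegral_withDensity_rpow (by fun_prop) (hP.measurable.comp hdist)
    (.of_forall fun y => radialPotential_ne_zero hne _)
    (ae_restrict_of_forall_mem hS fun y hy => ((hP hy).trans_lt hPR).ne)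
    ENNReal.ofReal_ne_top (ae_restrict_of_forall_mem hS hPu) hq.le).trans_lt ?_
  rw [← restrict_withDensity hS]
  exact ENNReal.mul_lt_top (ENNReal.rpow_lt_top_of_nonneg hq.le ENNReal.ofReal_ne_top)
    (setLIntegral_mul_radialPotential_rpow_neg_lt_top hd.le hPR hq hq1)

end Supersolution

theorem stmt11_general {X : Type*} [PseudoMetricSpace X] [MeasurableSpace X]
    [OpensMeasurableSpace X] (o : X) {d q : ℝ} (hd : 0 < d) (hq : 0 < q) (hq1 : q < 1)
    (σ : Measure X) [SFinite σ] (u : X → ENNReal)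
    (hsuper : ∀ x, rieszPotential d (σ.withDensity fun y => u y ^ q) x ≤ u x)
    {C : ENNReal} (hC : C ≠ ⊤)
    (hdual : ∀ R : ℝ, 0 < R →
      (∫⁻ y in ball o R, (ENNReal.ofReal (dist y o ^ (d * q)))⁻¹ ∂σ) ^ (1 / (1 - q)) ≤
        C * ∫⁻ y in ball o R, u y ^ q ∂σ) :
    (∃ c : ENNReal, 0 < c ∧ ∀ x, 0 < dist x o →
      c * ((∫⁻ y in ball o (dist x o), (ENNReal.ofReal (dist y o ^ (d * q)))⁻¹ ∂σ) ^
        (1 / (1 - q)) / ENNReal.ofReal (dist x o ^ d)) ≤ u x) ∧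
    ((∃ x, u x < ⊤) →
      ∫⁻ y in ball o 1, (ENNReal.ofReal (dist y o ^ (d * q)))⁻¹ ∂σ < ⊤ ∧
      ∫⁻ y in {y | 1 ≤ dist y o}, (ENNReal.ofReal (dist y o ^ d))⁻¹ ∂σ < ⊤) := by
  have hexp : 0 < 1 / (1 - q) := one_div_pos.2 (sub_pos.2 hq1)
  set ν := σ.withDensity fun y => u y ^ q with hν
  simp_rw [← withDensity_apply (μ := σ) (fun y => u y ^ q) measurableSet_ball, ← hν] at hdual
  refine ⟨⟨(C * ENNReal.ofReal (d * 2 ^ d))⁻¹,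
    ENNReal.inv_pos.2 (ENNReal.mul_ne_top hC ENNReal.ofReal_ne_top), fun x hx => ?_⟩,
    fun hfin => ⟨?_, ?_⟩⟩
  · exact (inv_mul_div_le_rieszPotential_of_le_measure_ball hd hx le_rfl (hdual _ hx)).trans
      (hsuper x)
  · obtain ⟨x, hx⟩ := hfin
    have hball : ν (ball o 1) < ⊤ :=
      measure_ball_lt_top_of_rieszPotential_lt_top hd one_pos ((hsuper x).trans_lt hx)
    exact (ENNReal.rpow_lt_top_iff_of_pos hexp).1
      ((hdual 1 one_pos).trans_lt (ENNReal.mul_lt_top hC.lt_top hball))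
  · by_cases hne : ν = 0
    · have hσ : σ = 0 := by
        refine eq_zero_of_setLIntegral_ball_eq_zero (o := o)
          (f := fun y => (ENNReal.ofReal (dist y o ^ (d * q)))⁻¹) (by fun_prop)
          (fun y => ENNReal.inv_ne_zero.2 ENNReal.ofReal_ne_top) fun R hR => ?_
        have h := hdual R hR
        rwa [hne, Measure.coe_zero, Pi.zero_apply, mul_zero, nonpos_iff_eq_zero,
          ENNReal.rpow_eq_zero_iff_of_pos hexp] at h
      simp [hσ]
    · exact setLIntegral_inv_dist_rpow_lt_top hd hq hq1 hsuper hne hfin one_pos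

theorem stmt11 {n : ℕ} (α q : ℝ) (σ : Measure (EuclideanSpace ℝ (Fin n)))
    [IsLocallyFiniteMeasure σ]
    (hq : 0 < q) (hq1 : q < 1) (hα : 0 < α) (hαn : 2 * α < n)
    (hrad : ∀ e : EuclideanSpace ℝ (Fin n) ≃ₗᵢ[ℝ] EuclideanSpace ℝ (Fin n),
      σ.map e = σ)
    (u : EuclideanSpace ℝ (Fin n) → ENNReal)
    (hurad : ∀ x y : EuclideanSpace ℝ (Fin n), ‖x‖ = ‖y‖ → u x = u y)
    (hnz : ¬ (∀ x, u x = 0)) (hni : ¬ (∀ x, u x = ⊤))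
    (hsuper : ∀ x, riesz2 α (σ.withDensity fun y => (u y) ^ q) x ≤ u x)
    (C : ENNReal) (hC : C ≠ ⊤)
    (hdual : ∀ R : ℝ, 0 < R →
      (∫⁻ y in ball (0 : EuclideanSpace ℝ (Fin n)) R,
          (ENNReal.ofReal (‖y‖ ^ (((n : ℝ) - 2 * α) * q)))⁻¹ ∂σ) ^ (1 / (1 - q))
        ≤ C * ∫⁻ y in ball (0 : EuclideanSpace ℝ (Fin n)) R, (u y) ^ q ∂σ) :
    (∃ c : ENNReal, 0 < c ∧
      ∀ x : EuclideanSpace ℝ (Fin n), x ≠ 0 →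
        c * ((∫⁻ y in ball (0 : EuclideanSpace ℝ (Fin n)) ‖x‖,
            (ENNReal.ofReal (‖y‖ ^ (((n : ℝ) - 2 * α) * q)))⁻¹ ∂σ) ^ (1 / (1 - q)) /
          ENNReal.ofReal (‖x‖ ^ ((n : ℝ) - 2 * α))) ≤ u x) ∧
    ((∃ x, u x < ⊤) →
      (∫⁻ y in ball (0 : EuclideanSpace ℝ (Fin n)) 1,
          (ENNReal.ofReal (‖y‖ ^ (((n : ℝ) - 2 * α) * q)))⁻¹ ∂σ) < ⊤ ∧
      (∫⁻ y in {y : EuclideanSpace ℝ (Fin n) | 1 ≤ ‖y‖},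
          (ENNReal.ofReal (‖y‖ ^ ((n : ℝ) - 2 * α)))⁻¹ ∂σ) < ⊤) := by
  simpa only [dist_zero_right, norm_pos_iff, riesz2_eq_rieszPotential] using
    stmt11_general 0 (sub_pos.2 hαn) hq hq1 σ u hsuper hC
      (by simpa only [dist_zero_right] using hdual)
end

section
/- Let 0 < q < 1, 0 < 2α < n, β > 1, and set s = (1-q)n + 2αq (so 2α < s < n). Define σ(y) = |y|^{-s} (log(1/|y|))^{-β} for |y| < 1/2 and σ(y) = 0 for |y| ≥ 1/2. Then: (a) ∫_{|y|<1} |y|^{-(n-2α)q} dσ(y) < ∞ and ∫_{|y|≥1} |y|^{-(n-2α)} dσ(y) = 0; (b) for small |x| > 0, ∫_{|y|<|x|} |y|^{-(n-2α)q} dσ(y) ≈ (log(1/|x|))^{1-β} and ∫_{|y|≥|x|} |y|^{-(n-2α)} dσ(y) ≈ |x|^{-(n-2α)(1-q)} (log(1/|x|))^{-β}; (c) consequently the ratio [|x|^{-(n-2α)(1-q)} ∫_{|y|<|x|} |y|^{-(n-2α)q} dσ(y)] / [∫_{|y|≥|x|} |y|^{-(n-2α)} dσ(y)] ≈ log(1/|x|)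 → ∞ as |x| → 0. -/
open MeasureTheory Metric Set Filter

/-- The ratio `[r^{-(n-2α)(1-q)} ∫_{B(0,r)} |y|^{-(n-2α)q} dσ] / [∫_{|y|≥r} |y|^{-(n-2α)} dσ]`. -/
noncomputable def ratioFn {n : ℕ} (α q : ℝ)
    (σ : Measure (EuclideanSpace ℝ (Fin n))) (r : ℝ) : ENNReal :=
  (∫⁻ y in ball (0 : EuclideanSpace ℝ (Fin n)) r,
      (ENNReal.ofReal (‖y‖ ^ (((n : ℝ) - 2 * α) * q)))⁻¹ ∂σ) /
    ENNReal.ofReal (r ^ (((n : ℝ) - 2 * α) * (1 - q))) /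
    (∫⁻ y in {y : EuclideanSpace ℝ (Fin n) | r ≤ ‖y‖},
      (ENNReal.ofReal (‖y‖ ^ ((n : ℝ) - 2 * α)))⁻¹ ∂σ)

/-- The measure with density `|y|^{-s} (log(1/|y|))^{-β}` on `{|y| < 1/2}` and `0` outside. -/
noncomputable def sigmaEx (n : ℕ) (s β : ℝ) : Measure (EuclideanSpace ℝ (Fin n)) :=
  (volume : Measure (EuclideanSpace ℝ (Fin n))).withDensity fun y =>
    if ‖y‖ < 1 / 2 then
      ENNReal.ofReal (‖y‖ ^ (-s) * (Real.log (1 / ‖y‖)) ^ (-β))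
    else 0

/-!
In polar coordinates both integrals become one-dimensional with integrand
`t ^ e * log (1 / t) ^ (-β)`. The choice of `s` makes `e = -1` for the inner integral, which the
substitution `u = log (1 / t)` evaluates exactly, and `e = -a - 1` with `a > 0` for the outer one,
where the mass sits at `t` comparable to `r`: because `log (1 / t)` varies slowly, replacing it by
`log (1 / r)` costs only a factor `(t / r) ^ (a / 2)`, which the decay `t ^ (-a - 1)` absorbs.
-/

section Polar

variable {E : Type*} [NormedAddCommGroup E] [NormedSpace ℝ E] [FiniteDimensional ℝ E]
  [Nontrivial E] [MeasurableSpace E] [BorelSpace E] (μ : Measure E) [μ.IsAddHaarMeasure]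

lemma lintegral_fun_norm_addHaar {f : ℝ → ENNReal} (hf : Measurable f) :
    ∫⁻ x, f ‖x‖ ∂μ = μ.toSphere univ *
      ∫⁻ t in Ioi (0 : ℝ), ENNReal.ofReal (t ^ (Module.finrank ℝ E - 1)) * f t := by
  calc
    ∫⁻ x, f ‖x‖ ∂μ = ∫⁻ x : ({(0)}ᶜ : Set E), f ‖x.1‖ ∂(μ.comap (↑)) := by
      rw [lintegral_subtype_comap (measurableSet_singleton _).compl fun x ↦ f ‖x‖,
        restrict_compl_singleton]
    _ = ∫⁻ x, f x.2 ∂μ.toSphere.prod (.volumeIoiPow (Module.finrank ℝ E - 1)) := by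
      rw [← μ.measurePreserving_homeomorphUnitSphereProd.lintegral_comp_emb
        (Homeomorph.measurableEmbedding _)]
      simp
    _ = μ.toSphere univ * ∫⁻ x : Ioi (0 : ℝ), f x ∂(.volumeIoiPow (Module.finrank ℝ E - 1)) := by
      rw [lintegral_prod _ (by fun_prop)]
      simp only [lintegral_const, mul_comm]
    _ = _ := by
      rw [Measure.volumeIoiPow,
        lintegral_withDensity_eq_lintegral_mul _ (by fun_prop) (by fun_prop)]
      exact congrArg _ (lintegral_subtype_comap measurableSet_Ioi
        fun t : ℝ ↦ ENNReal.ofReal (t ^ (Module.finrank ℝ E - 1)) * f t)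

lemma setLIntegral_fun_norm_withDensity {f g : ℝ → ENNReal} (hf : Measurable f)
    (hg : Measurable g) {T : Set ℝ} (hT : MeasurableSet T) :
    ∫⁻ y in {y : E | ‖y‖ ∈ T}, g ‖y‖ ∂(μ.withDensity fun y ↦ f ‖y‖) =
      μ.toSphere univ *
        ∫⁻ t in T ∩ Ioi 0, ENNReal.ofReal (t ^ (Module.finrank ℝ E - 1)) * (f t * g t) := by
  have hT' : MeasurableSet {y : E | ‖y‖ ∈ T} := measurable_norm hT
  calc
    _ = ∫⁻ y, T.indicator (fun t ↦ f t * g t) ‖y‖ ∂μ := by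
      rw [setLIntegral_withDensity_eq_setLIntegral_mul _ (by fun_prop) (by fun_prop) hT',
        ← lintegral_indicator hT']
      rfl
    _ = _ := by
      have measurable_mul : Measurable fun t ↦ f t * g t := hf.mul hg
      rw [lintegral_fun_norm_addHaar μ (measurable_mul.indicator hT), ← setLIntegral_indicator hT]
      simp only [indicator_mul_right T fun t : ℝ ↦ ENNReal.ofReal (t ^ (Module.finrank ℝ E - 1))]

end Polar

section OneDimensional

lemma setLIntegral_Ioo_inv_mul_comp_log_one_div {r : ℝ} (hr : 0 < r) (g : ℝ → ENNReal) :
    ∫⁻ t in Ioo 0 r, ENNReal.ofReal t⁻¹ * g (Real.log (1 / t)) =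
      ∫⁻ u in Ioi (Real.log (1 / r)), g u := by
  have image_eq : (fun u : ℝ ↦ Real.exp (-u)) '' Ioi (Real.log (1 / r)) = Ioo 0 r := by
    ext t
    simp only [mem_Ioo, mem_image, mem_Ioi, one_div, Real.log_inv]
    constructor
    · rintro ⟨u, hu, rfl⟩
      exact ⟨Real.exp_pos _, by rw [← Real.lt_log_iff_exp_lt hr]; linarith⟩
    · rintro ⟨h0, h1⟩
      exact ⟨-Real.log t, neg_lt_neg (Real.log_lt_log h0 h1), by rw [neg_neg, Real.exp_log h0]⟩
  have hasDeriv (u : ℝ) : HasDerivAt (fun u ↦ Real.exp (-u)) (-Real.exp (-u)) u := by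
    simpa using (hasDerivAt_neg u).exp
  have injective : Function.Injective fun u : ℝ ↦ Real.exp (-u) :=
    Real.exp_injective.comp neg_injective
  rw [← image_eq, lintegral_image_eq_lintegral_abs_deriv_mul measurableSet_Ioi
    (fun u _ ↦ (hasDeriv u).hasDerivWithinAt) injective.injOn]
  refine lintegral_congr fun u ↦ ?_
  rw [abs_neg, Real.abs_exp, ← mul_assoc, ← ENNReal.ofReal_mul (Real.exp_pos _).le,
    mul_inv_cancel₀ (Real.exp_pos _).ne', ENNReal.ofReal_one, one_mul, one_div, Real.log_inv,
    Real.log_exp, neg_neg]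

lemma setLIntegral_Ioi_rpow_of_lt {b c : ℝ} (hb : b < -1) (hc : 0 < c) :
    ∫⁻ t in Ioi c, ENNReal.ofReal (t ^ b) = ENNReal.ofReal (-c ^ (b + 1) / (b + 1)) := by
  rw [← integral_Ioi_rpow_of_lt hb hc,
    ofReal_integral_eq_lintegral_ofReal (integrableOn_Ioi_rpow_of_lt hb hc)]
  filter_upwards [ae_restrict_mem measurableSet_Ioi] with t ht
  exact Real.rpow_nonneg (hc.trans ht).le b

lemma setLIntegral_Ioo_rpow_neg_one_mul_log_rpow {r β : ℝ} (hr : 0 < r) (hr1 : r < 1)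
    (hβ : 1 < β) :
    ∫⁻ t in Ioo 0 r, ENNReal.ofReal (t ^ (-1 : ℝ) * Real.log (1 / t) ^ (-β)) =
      ENNReal.ofReal (β - 1)⁻¹ * ENNReal.ofReal (Real.log (1 / r) ^ (1 - β)) := by
  calc
    _ = ∫⁻ t in Ioo 0 r, ENNReal.ofReal t⁻¹ * ENNReal.ofReal (Real.log (1 / t) ^ (-β)) := by
      refine setLIntegral_congr_fun measurableSet_Ioo fun t ht ↦ ?_
      simp only [Real.rpow_neg_one, ENNReal.ofReal_mul (inv_nonneg.2 ht.1.le)]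
    _ = ∫⁻ u in Ioi (Real.log (1 / r)), ENNReal.ofReal (u ^ (-β)) :=
      setLIntegral_Ioo_inv_mul_comp_log_one_div hr fun u ↦ ENNReal.ofReal (u ^ (-β))
    _ = ENNReal.ofReal (-Real.log (1 / r) ^ (-β + 1) / (-β + 1)) :=
      setLIntegral_Ioi_rpow_of_lt (by linarith) (Real.log_pos (one_lt_one_div hr hr1))
    _ = _ := by
      rw [← ENNReal.ofReal_mul (inv_nonneg.2 (by linarith)), ← neg_sub β 1, neg_add_eq_sub,
        ← neg_sub β 1, neg_div_neg_eq, div_eq_inv_mul]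

lemma log_one_div_le_mul_rpow_mul_log_one_div {ρ r t ε : ℝ} (hρ : ρ < 1) (hr : 0 < r)
    (hrt : r ≤ t) (htρ : t ≤ ρ) (hε : 0 < ε) :
    Real.log (1 / r) ≤
      (1 + 1 / (ε * Real.log (1 / ρ))) * (t / r) ^ ε * Real.log (1 / t) := by
  have ht : 0 < t := hr.trans_le hrt
  have log_ρ_pos : 0 < Real.log (1 / ρ) :=
    Real.log_pos (one_lt_one_div (ht.trans_le htρ) hρ)
  have log_ρ_le : Real.log (1 / ρ) ≤ Real.log (1 / t) :=
    Real.log_le_log (one_div_pos.2 (ht.trans_le htρ)) (one_div_le_one_div_of_le ht htρ)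
  have one_le : 1 ≤ t / r := (one_le_div hr).2 hrt
  calc
    Real.log (1 / r) = Real.log (1 / t) + Real.log (t / r) := by
      rw [← Real.log_mul (by positivity) (by positivity), one_div_mul_eq_div,
        div_div_cancel_left' ht.ne', one_div]
    _ ≤ (t / r) ^ ε * Real.log (1 / t) + (t / r) ^ ε / ε := by
      gcongr
      · exact le_mul_of_one_le_left (log_ρ_pos.trans_le log_ρ_le).le (Real.one_le_rpow one_le hε.le)
      · exact Real.log_le_rpow_div (by positivity) hε
    _ = (t / r) ^ ε * Real.log (1 / t) +
        (t / r) ^ ε / (ε * Real.log (1 / ρ)) * Real.log (1 / ρ) := by field_simp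
    _ ≤ (t / r) ^ ε * Real.log (1 / t) +
        (t / r) ^ ε / (ε * Real.log (1 / ρ)) * Real.log (1 / t) := by gcongr
    _ = _ := by ring

/- Potter's bound for the slowly varying function `t ↦ log (1 / t) ^ (-β)`. -/
lemma exists_log_one_div_rpow_neg_le {ρ β η : ℝ} (hρ0 : 0 < ρ) (hρ : ρ < 1) (hβ : 0 < β)
    (hη : 0 < η) :
    ∃ K : ℝ, 0 < K ∧ ∀ r t : ℝ, 0 < r → r ≤ t → t ≤ ρ →
      Real.log (1 / t) ^ (-β) ≤ K * (t / r) ^ η * Real.log (1 / r) ^ (-β) := by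
  have log_pos {x : ℝ} (hx : 0 < x) (hxρ : x ≤ ρ) : 0 < Real.log (1 / x) :=
    Real.log_pos (one_lt_one_div hx (hxρ.trans_lt hρ))
  have hℓ := log_pos hρ0 le_rfl
  set M : ℝ := 1 + 1 / (η / β * Real.log (1 / ρ))
  have hM : 0 < M := by positivity
  refine ⟨M ^ β, by positivity, fun r t hr hrt htρ ↦ ?_⟩
  have ht : 0 < t := hr.trans_le hrt
  have hLt := log_pos ht htρ
  have hLr := log_pos hr (hrt.trans htρ)
  have key : Real.log (1 / r) ^ β ≤ M ^ β * (t / r) ^ η * Real.log (1 / t) ^ β := calc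
    _ ≤ (M * (t / r) ^ (η / β) * Real.log (1 / t)) ^ β := by
      gcongr
      exact log_one_div_le_mul_rpow_mul_log_one_div hρ hr hrt htρ (by positivity)
    _ = _ := by
      rw [Real.mul_rpow (by positivity) hLt.le, Real.mul_rpow hM.le (by positivity),
        ← Real.rpow_mul (by positivity), div_mul_cancel₀ η hβ.ne']
  rw [Real.rpow_neg hLt.le, Real.rpow_neg hLr.le, ← div_eq_mul_inv, le_div_iff₀ (by positivity),
    inv_mul_le_iff₀ (by positivity)]
  linarith

lemma le_setLIntegral_Ico_rpow_mul_log_rpow {a β ρ r : ℝ} (ha : -1 ≤ a) (hβ : 0 ≤ β)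
    (hρ : ρ < 1) (hr : 0 < r) (hrρ : 2 * r ≤ ρ) :
    ENNReal.ofReal (2 ^ (-a - 1)) * ENNReal.ofReal (r ^ (-a) * Real.log (1 / r) ^ (-β)) ≤
      ∫⁻ t in Ico r ρ, ENNReal.ofReal (t ^ (-a - 1) * Real.log (1 / t) ^ (-β)) := by
  have hLr : 0 < Real.log (1 / r) := Real.log_pos (one_lt_one_div hr (by linarith))
  calc
    _ = ∫⁻ t in Ico r (2 * r),
        ENNReal.ofReal ((2 * r) ^ (-a - 1) * Real.log (1 / r) ^ (-β)) := by
      rw [setLIntegral_const, Real.volume_Ico, ← ENNReal.ofReal_mul (by positivity),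
        ← ENNReal.ofReal_mul' (by linarith), Real.mul_rpow zero_le_two hr.le,
        Real.rpow_sub_one hr.ne']
      congr 1
      field_simp
      ring
    _ ≤ ∫⁻ t in Ico r (2 * r), ENNReal.ofReal (t ^ (-a - 1) * Real.log (1 / t) ^ (-β)) := by
      refine setLIntegral_mono' measurableSet_Ico fun t ⟨hrt, htr⟩ ↦ ENNReal.ofReal_le_ofReal ?_
      have ht : 0 < t := hr.trans_le hrt
      have hLt : 0 < Real.log (1 / t) := Real.log_pos (one_lt_one_div ht (by linarith))
      have log_le : Real.log (1 / t) ≤ Real.log (1 / r) := by gcongr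
      exact mul_le_mul (Real.rpow_le_rpow_of_nonpos ht htr.le (by linarith))
        (Real.rpow_le_rpow_of_nonpos hLt log_le (by linarith)) (by positivity) (by positivity)
    _ ≤ _ := lintegral_mono_set (Ico_subset_Ico_right hrρ)

lemma exists_setLIntegral_Ico_rpow_mul_log_rpow_le {a β ρ : ℝ} (ha : 0 < a) (hβ : 0 < β)
    (hρ0 : 0 < ρ) (hρ : ρ < 1) :
    ∃ C : ℝ, ∀ r : ℝ, 0 < r → r < ρ →
      ∫⁻ t in Ico r ρ, ENNReal.ofReal (t ^ (-a - 1) * Real.log (1 / t) ^ (-β)) ≤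
        ENNReal.ofReal C * ENNReal.ofReal (r ^ (-a) * Real.log (1 / r) ^ (-β)) := by
  obtain ⟨K, hK, potter⟩ := exists_log_one_div_rpow_neg_le hρ0 hρ hβ (half_pos ha)
  refine ⟨K * (2 / a), fun r hr hrρ ↦ ?_⟩
  have hLr : 0 < Real.log (1 / r) := Real.log_pos (one_lt_one_div hr (hrρ.trans hρ))
  set D : ℝ := K * r ^ (-(a / 2)) * Real.log (1 / r) ^ (-β)
  have hD : 0 ≤ D := by positivity
  have integrand_le (t : ℝ) (ht : t ∈ Ico r ρ) :
      t ^ (-a - 1) * Real.log (1 / t) ^ (-β) ≤ D * t ^ (-(a / 2) - 1) := by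
    have ht0 : 0 < t := hr.trans_le ht.1
    calc
      _ ≤ t ^ (-a - 1) * (K * (t / r) ^ (a / 2) * Real.log (1 / r) ^ (-β)) := by
        gcongr
        exact potter r t hr ht.1 ht.2.le
      _ = D * t ^ (-(a / 2) - 1) := by
        rw [show -(a / 2) - 1 = (-a - 1) + a / 2 by ring, Real.rpow_add ht0,
          Real.div_rpow ht0.le hr.le, div_eq_mul_inv, ← Real.rpow_neg hr.le]
        ring
  calc
    _ ≤ ∫⁻ t in Ico r ρ, ENNReal.ofReal D * ENNReal.ofReal (t ^ (-(a / 2) - 1)) := by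
      refine setLIntegral_mono' measurableSet_Ico fun t ht ↦ ?_
      rw [← ENNReal.ofReal_mul hD]
      exact ENNReal.ofReal_le_ofReal (integrand_le t ht)
    _ ≤ ∫⁻ t in Ici r, ENNReal.ofReal D * ENNReal.ofReal (t ^ (-(a / 2) - 1)) :=
      lintegral_mono_set Ico_subset_Ici_self
    _ = ENNReal.ofReal D * ENNReal.ofReal (-r ^ (-(a / 2) - 1 + 1) / (-(a / 2) - 1 + 1)) := by
      rw [lintegral_const_mul _ (by fun_prop), setLIntegral_congr Ioi_ae_eq_Ici.symm,
        setLIntegral_Ioi_rpow_of_lt (by linarith) hr]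
    _ = _ := by
      rw [← ENNReal.ofReal_mul hD, ← ENNReal.ofReal_mul (by positivity), sub_add_cancel,
        neg_div_neg_eq, show -a = -(a / 2) + -(a / 2) by ring, Real.rpow_add hr]
      congr 1
      simp only [D]
      field_simp

end OneDimensional

section LogPowerMeasure

variable {E : Type*} [NormedAddCommGroup E] [MeasurableSpace E]

/-- The integral of `‖y‖ ^ (-p)` over the open ball of radius `r` about the origin. -/
noncomputable def innerIntegral (σ : Measure E) (p r : ℝ) : ENNReal :=
  ∫⁻ y in ball 0 r, (ENNReal.ofReal (‖y‖ ^ p))⁻¹ ∂σ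

/-- The integral of `‖y‖ ^ (-p)` over the complement of the open ball of radius `r` about the
origin. -/
noncomputable def outerIntegral (σ : Measure E) (p r : ℝ) : ENNReal :=
  ∫⁻ y in {y | r ≤ ‖y‖}, (ENNReal.ofReal (‖y‖ ^ p))⁻¹ ∂σ

/-- The measure with density `‖y‖ ^ (-s) * log (1 / ‖y‖) ^ (-β)` with respect to `μ` on the open
ball of radius `ρ`, and `0` outside; it generalizes `sigmaEx`, where `ρ = 1 / 2`. -/
noncomputable def logPowerMeasure (μ : Measure E) (ρ s β : ℝ) : Measure E :=
  μ.withDensity fun y ↦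
    if ‖y‖ < ρ then ENNReal.ofReal (‖y‖ ^ (-s) * Real.log (1 / ‖y‖) ^ (-β)) else 0

variable [NormedSpace ℝ E] [FiniteDimensional ℝ E] [Nontrivial E] [BorelSpace E]
  (μ : Measure E) [μ.IsAddHaarMeasure]

lemma setLIntegral_norm_rpow_logPowerMeasure (ρ s β p : ℝ) {T : Set ℝ} (hT : MeasurableSet T) :
    ∫⁻ y in {y : E | ‖y‖ ∈ T}, (ENNReal.ofReal (‖y‖ ^ p))⁻¹ ∂(logPowerMeasure μ ρ s β) =
      μ.toSphere univ * ∫⁻ t in T ∩ Ioo 0 ρ,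
        ENNReal.ofReal (t ^ (Module.finrank ℝ E - (p + s) - 1) * Real.log (1 / t) ^ (-β)) := by
  let f (t : ℝ) : ENNReal :=
    if t < ρ then ENNReal.ofReal (t ^ (-s) * Real.log (1 / t) ^ (-β)) else 0
  have hf : Measurable f := .ite measurableSet_Iio (by fun_prop) measurable_const
  refine (setLIntegral_fun_norm_withDensity μ hf
    (g := fun t ↦ (ENNReal.ofReal (t ^ p))⁻¹) (by fun_prop) hT).trans ?_
  congr 1
  rw [← Ioi_inter_Iio, ← inter_assoc, inter_comm _ (Iio ρ),
    ← setLIntegral_indicator measurableSet_Iio]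
  refine setLIntegral_congr_fun (hT.inter measurableSet_Ioi) fun t ht ↦ ?_
  have ht0 : 0 < t := ht.2
  by_cases htρ : t < ρ
  · have finrank_pos : 1 ≤ Module.finrank ℝ E := Module.finrank_pos
    simp only [f, if_pos htρ, indicator_of_mem (show t ∈ Iio ρ from htρ)]
    rw [← ENNReal.ofReal_inv_of_pos (by positivity), ← ENNReal.ofReal_mul' (by positivity),
      ← ENNReal.ofReal_mul (by positivity), ← Real.rpow_neg ht0.le, ← Real.rpow_natCast,
      Nat.cast_sub finrank_pos, Nat.cast_one,
      show (Module.finrank ℝ E : ℝ) - (p + s) - 1 = (Module.finrank ℝ E - 1) + -s + -p by ring,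
      Real.rpow_add ht0, Real.rpow_add ht0]
    ring_nf
  · simp [f, htρ]

variable {ρ s β p a r : ℝ}

lemma innerIntegral_logPowerMeasure (hρ0 : 0 < ρ) (hρ : ρ < 1) (hβ : 1 < β)
    (hps : p + s = Module.finrank ℝ E) (hr : 0 < r) :
    innerIntegral (logPowerMeasure μ ρ s β) p r =
      μ.toSphere univ * (ENNReal.ofReal (β - 1)⁻¹ *
        ENNReal.ofReal (Real.log (1 / min r ρ) ^ (1 - β))) := by
  have ball_eq : ball (0 : E) r = {y | ‖y‖ ∈ Iio r} := by ext; simp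
  have Ioo_eq : Iio r ∩ Ioo 0 ρ = Ioo 0 (min r ρ) := by
    rw [inter_comm, Ioo_inter_Iio, min_comm]
  rw [innerIntegral, ball_eq, setLIntegral_norm_rpow_logPowerMeasure μ ρ s β p measurableSet_Iio,
    Ioo_eq, hps, sub_self, zero_sub,
    setLIntegral_Ioo_rpow_neg_one_mul_log_rpow (lt_min hr hρ0) (min_lt_of_right_lt hρ) hβ]

lemma outerIntegral_logPowerMeasure (hps : p + s = Module.finrank ℝ E + a) (hr : 0 < r) :
    outerIntegral (logPowerMeasure μ ρ s β) p r =
      μ.toSphere univ *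
        ∫⁻ t in Ico r ρ, ENNReal.ofReal (t ^ (-a - 1) * Real.log (1 / t) ^ (-β)) := by
  have Ico_eq : Ici r ∩ Ioo 0 ρ = Ico r ρ := by
    rw [← Ioi_inter_Iio, ← inter_assoc, inter_eq_left.2 (Ici_subset_Ioi.2 hr), Ici_inter_Iio]
  rw [← Ico_eq, ← sub_add_cancel_left (Module.finrank ℝ E : ℝ) a, ← hps]
  exact setLIntegral_norm_rpow_logPowerMeasure μ ρ s β p measurableSet_Ici

lemma exists_bounds_innerIntegral_outerIntegral_logPowerMeasure {p' : ℝ} (hρ0 : 0 < ρ)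
    (hρ : ρ < 1) (hβ : 1 < β) (ha : 0 < a) (hps : p + s = Module.finrank ℝ E)
    (hps' : p' + s = Module.finrank ℝ E + a) :
    ∃ c₁ c₂ : ENNReal, 0 < c₁ ∧ c₂ ≠ ⊤ ∧ ∃ δ : ℝ, 0 < δ ∧ δ < ρ ∧ ∀ r : ℝ, 0 < r → r < δ →
      (c₁ * ENNReal.ofReal (Real.log (1 / r) ^ (1 - β))
          ≤ innerIntegral (logPowerMeasure μ ρ s β) p r ∧
        innerIntegral (logPowerMeasure μ ρ s β) p r
          ≤ c₂ * ENNReal.ofReal (Real.log (1 / r) ^ (1 - β))) ∧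
      (c₁ * ENNReal.ofReal (r ^ (-a) * Real.log (1 / r) ^ (-β))
          ≤ outerIntegral (logPowerMeasure μ ρ s β) p' r ∧
        outerIntegral (logPowerMeasure μ ρ s β) p' r
          ≤ c₂ * ENNReal.ofReal (r ^ (-a) * Real.log (1 / r) ^ (-β))) := by
  obtain ⟨C, hC⟩ := exists_setLIntegral_Ico_rpow_mul_log_rpow_le ha (zero_lt_one.trans hβ) hρ0 hρ
  set B : ENNReal := ENNReal.ofReal (β - 1)⁻¹
  set A : ENNReal := ENNReal.ofReal (2 ^ (-a - 1))
  have sphere_ne_zero : μ.toSphere univ ≠ 0 :=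
    Measure.measure_univ_ne_zero.2 μ.toSphere_ne_zero
  have hB : 0 < B := ENNReal.ofReal_pos.2 (inv_pos.2 (by linarith))
  have hA : 0 < A := ENNReal.ofReal_pos.2 (by positivity)
  refine ⟨μ.toSphere univ * min B A, μ.toSphere univ * max B (ENNReal.ofReal C),
    ENNReal.mul_pos sphere_ne_zero (lt_min hB hA).ne',
    ENNReal.mul_ne_top (measure_ne_top _ _) (by simp [B]), ρ / 2, half_pos hρ0, half_lt_self hρ0,
    fun r hr hrρ ↦ ?_⟩
  rw [innerIntegral_logPowerMeasure μ hρ0 hρ hβ hps hr, min_eq_left (show r ≤ ρ by linarith),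
    outerIntegral_logPowerMeasure μ hps' hr]
  simp only [mul_assoc]
  refine ⟨⟨?_, ?_⟩, ?_, ?_⟩ <;> refine mul_le_mul_right ?_ _
  · exact mul_le_mul_left (min_le_left B A) _
  · exact mul_le_mul_left (le_max_left B _) _
  · exact (mul_le_mul_left (min_le_right B A) _).trans
      (le_setLIntegral_Ico_rpow_mul_log_rpow (by linarith) (by linarith) hρ hr (by linarith))
  · exact (hC r hr (by linarith)).trans (mul_le_mul_left (le_max_right B _) _)

end LogPowerMeasure

lemma tendsto_div_rpow_div_nhds_top {I O : ℝ → ENNReal} {a β : ℝ} {c₁ c₂ : ENNReal}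
    (hc₁ : 0 < c₁) (hc₂ : c₂ ≠ ⊤)
    (hI : ∀ᶠ r in nhdsWithin (0 : ℝ) (Ioi 0),
      c₁ * ENNReal.ofReal (Real.log (1 / r) ^ (1 - β)) ≤ I r)
    (hO : ∀ᶠ r in nhdsWithin (0 : ℝ) (Ioi 0),
      O r ≤ c₂ * ENNReal.ofReal (r ^ (-a) * Real.log (1 / r) ^ (-β))) :
    Tendsto (fun r ↦ I r / ENNReal.ofReal (r ^ a) / O r) (nhdsWithin 0 (Ioi 0)) (nhds ⊤) := by
  have log_tendsto : Tendsto (fun r : ℝ ↦ Real.log (1 / r)) (nhdsWithin 0 (Ioi 0)) atTop := by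
    simpa only [one_div, Function.comp_def] using
      Real.tendsto_log_atTop.comp tendsto_inv_nhdsGT_zero
  have lower_tendsto : Tendsto (fun r : ℝ ↦ c₁ * c₂⁻¹ * ENNReal.ofReal (Real.log (1 / r)))
      (nhdsWithin 0 (Ioi 0)) (nhds ⊤) := by
    have c_ne_zero : c₁ * c₂⁻¹ ≠ 0 := mul_ne_zero hc₁.ne' (ENNReal.inv_ne_zero.2 hc₂)
    simpa only [ENNReal.mul_top c_ne_zero, Function.comp_apply] using ENNReal.Tendsto.const_mul
      (a := c₁ * c₂⁻¹) (ENNReal.tendsto_ofReal_atTop.comp log_tendsto) (.inl ENNReal.top_ne_zero)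
  refine tendsto_nhds_top_mono lower_tendsto ?_
  filter_upwards [hI, hO, self_mem_nhdsWithin, log_tendsto.eventually_gt_atTop 0]
    with r hIr hOr hr hL
  rw [mem_Ioi] at hr
  have log_eq : Real.log (1 / r) = Real.log (1 / r) ^ (1 - β) * (r ^ a)⁻¹ *
      (r ^ (-a) * Real.log (1 / r) ^ (-β))⁻¹ := by
    rw [sub_eq_add_neg, Real.rpow_add hL, Real.rpow_one, Real.rpow_neg hr.le]
    field_simp
  calc
    c₁ * c₂⁻¹ * ENNReal.ofReal (Real.log (1 / r)) =
        c₁ * ENNReal.ofReal (Real.log (1 / r) ^ (1 - β)) / ENNReal.ofReal (r ^ a) /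
          (c₂ * ENNReal.ofReal (r ^ (-a) * Real.log (1 / r) ^ (-β))) := by
      conv_lhs => rw [log_eq]
      rw [ENNReal.ofReal_mul (by positivity), ENNReal.ofReal_mul (by positivity),
        ENNReal.ofReal_inv_of_pos (by positivity), ENNReal.ofReal_inv_of_pos (by positivity),
        ENNReal.div_eq_inv_mul, ENNReal.div_eq_inv_mul,
        ENNReal.mul_inv (.inr ENNReal.ofReal_ne_top) (.inl hc₂)]
      ring
    _ ≤ I r / ENNReal.ofReal (r ^ a) / O r := by gcongr

theorem stmt14_general {E : Type*} [NormedAddCommGroup E] [NormedSpace ℝ E]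
    [FiniteDimensional ℝ E] [Nontrivial E] [MeasurableSpace E] [BorelSpace E] (μ : Measure E)
    [μ.IsAddHaarMeasure] {γ q ρ s β : ℝ} (hγq : 0 < γ * (1 - q)) (hρ0 : 0 < ρ) (hρ : ρ < 1)
    (hβ : 1 < β) (hs : γ * q + s = Module.finrank ℝ E) :
    (innerIntegral (logPowerMeasure μ ρ s β) (γ * q) 1 < ⊤ ∧
      outerIntegral (logPowerMeasure μ ρ s β) γ 1 = 0) ∧
    (∃ c₁ c₂ : ENNReal, 0 < c₁ ∧ c₂ ≠ ⊤ ∧ ∃ δ : ℝ, 0 < δ ∧ δ < ρ ∧ ∀ r : ℝ, 0 < r → r < δ →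
      (c₁ * ENNReal.ofReal (Real.log (1 / r) ^ (1 - β))
          ≤ innerIntegral (logPowerMeasure μ ρ s β) (γ * q) r ∧
        innerIntegral (logPowerMeasure μ ρ s β) (γ * q) r
          ≤ c₂ * ENNReal.ofReal (Real.log (1 / r) ^ (1 - β))) ∧
      (c₁ * ENNReal.ofReal (r ^ (-γ * (1 - q)) * Real.log (1 / r) ^ (-β))
          ≤ outerIntegral (logPowerMeasure μ ρ s β) γ r ∧
        outerIntegral (logPowerMeasure μ ρ s β) γ r
          ≤ c₂ * ENNReal.ofReal (r ^ (-γ * (1 - q)) * Real.log (1 / r) ^ (-β)))) ∧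
    Tendsto (fun r ↦ innerIntegral (logPowerMeasure μ ρ s β) (γ * q) r /
        ENNReal.ofReal (r ^ (γ * (1 - q))) / outerIntegral (logPowerMeasure μ ρ s β) γ r)
      (nhdsWithin 0 (Ioi 0)) (nhds ⊤) := by
  have hs' : γ + s = Module.finrank ℝ E + γ * (1 - q) := by linarith
  have bounds := exists_bounds_innerIntegral_outerIntegral_logPowerMeasure μ hρ0 hρ hβ hγq hs hs'
  rw [neg_mul]
  refine ⟨⟨?_, ?_⟩, bounds, ?_⟩
  · rw [innerIntegral_logPowerMeasure μ hρ0 hρ hβ hs one_pos]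
    exact ENNReal.mul_lt_top (measure_lt_top _ _)
      (ENNReal.mul_lt_top ENNReal.ofReal_lt_top ENNReal.ofReal_lt_top)
  · rw [outerIntegral_logPowerMeasure μ hs' one_pos, Ico_eq_empty_of_le hρ.le,
      setLIntegral_empty, mul_zero]
  · obtain ⟨c₁, c₂, hc₁, hc₂, δ, hδ, -, h⟩ := bounds
    have small : ∀ᶠ r in nhdsWithin (0 : ℝ) (Ioi 0), r ∈ Ioo 0 δ := Ioo_mem_nhdsGT hδ
    exact tendsto_div_rpow_div_nhds_top hc₁ hc₂
      (small.mono fun r hr ↦ (h r hr.1 hr.2).1.1) (small.mono fun r hr ↦ (h r hr.1 hr.2).2.2)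

theorem stmt14 {n : ℕ} (α q s β : ℝ)
    (hn : 1 ≤ n) (hq : 0 < q) (hq1 : q < 1) (hα : 0 < α) (hαn : 2 * α < n)
    (hβ : 1 < β) (hs : s = (1 - q) * n + 2 * α * q) :
    -- (a)
    ((∫⁻ y in ball (0 : EuclideanSpace ℝ (Fin n)) 1,
        (ENNReal.ofReal (‖y‖ ^ (((n : ℝ) - 2 * α) * q)))⁻¹ ∂(sigmaEx n s β)) < ⊤ ∧
      (∫⁻ y in {y : EuclideanSpace ℝ (Fin n) | 1 ≤ ‖y‖},
        (ENNReal.ofReal (‖y‖ ^ ((n : ℝ) - 2 * α)))⁻¹ ∂(sigmaEx n s β)) = 0) ∧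
    -- (b)
    (∃ c₁ c₂ : ENNReal, 0 < c₁ ∧ c₂ ≠ ⊤ ∧ ∃ δ : ℝ, 0 < δ ∧ δ < 1 / 2 ∧
      ∀ r : ℝ, 0 < r → r < δ →
        (c₁ * ENNReal.ofReal ((Real.log (1 / r)) ^ (1 - β))
            ≤ (∫⁻ y in ball (0 : EuclideanSpace ℝ (Fin n)) r,
                (ENNReal.ofReal (‖y‖ ^ (((n : ℝ) - 2 * α) * q)))⁻¹ ∂(sigmaEx n s β)) ∧
          (∫⁻ y in ball (0 : EuclideanSpace ℝ (Fin n)) r,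
              (ENNReal.ofReal (‖y‖ ^ (((n : ℝ) - 2 * α) * q)))⁻¹ ∂(sigmaEx n s β))
            ≤ c₂ * ENNReal.ofReal ((Real.log (1 / r)) ^ (1 - β))) ∧
        (c₁ * ENNReal.ofReal (r ^ (-((n : ℝ) - 2 * α) * (1 - q)) * (Real.log (1 / r)) ^ (-β))
            ≤ (∫⁻ y in {y : EuclideanSpace ℝ (Fin n) | r ≤ ‖y‖},
                (ENNReal.ofReal (‖y‖ ^ ((n : ℝ) - 2 * α)))⁻¹ ∂(sigmaEx n s β)) ∧
          (∫⁻ y in {y : EuclideanSpace ℝ (Fin n) | r ≤ ‖y‖},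
              (ENNReal.ofReal (‖y‖ ^ ((n : ℝ) - 2 * α)))⁻¹ ∂(sigmaEx n s β))
            ≤ c₂ * ENNReal.ofReal
                (r ^ (-((n : ℝ) - 2 * α) * (1 - q)) * (Real.log (1 / r)) ^ (-β)))) ∧
    -- (c)
    Tendsto (ratioFn α q (sigmaEx n s β)) (nhdsWithin (0:ℝ) (Ioi 0)) (nhds ⊤) := by
  have : NeZero n := ⟨by lia⟩
  exact stmt14_general volume (mul_pos (by linarith) (by linarith)) one_half_pos one_half_lt_one hβ
    (by rw [finrank_euclideanSpace_fin, hs]; ring)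
end
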